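/- arXiv:1001.4489 — 2 statements merged into one kernel-verified Lean document; each statement's English description precedes it below -/
import Mathlib

section
/- Let n ≥ 2 and 0 < λ ≤ Λ. For every α ∈ (−1,∞), the function ξ_α is smooth on ℝⁿ∖{0} and satisfies 𝒫⁻_{λ,Λ}(D²ξ_α(x)) = 0 for every x ∈ ℝⁿ∖{0} (where D²ξ_α(x) denotes the Hessian matrix of ξ_α at x) if and only if α = (λ/Λ)(n−1) − 1. -/
/-!
With `s = c |x| ^ (-α - 2)`, where `c = |α|` for `α ≠ 0` and `c = 1` for `α = 0`, the gradient of
`ξ_α` at `x ≠ 0` is `-s x` in all three cases of the definition (`hasFDerivAt_xiFun`), so the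
Hessian is `s ((α + 2) / |x|² x xᵀ - I)` (`hessianMatrix_xiFun`). Its eigenvalues are
`p = s (α + 1)`, once and in the direction of `x`, and `q = -s`, with multiplicity `n - 1`. Since
`α > -1` gives `q < 0 < p`, the operator takes the value `-(Λ p + λ (n - 1) q)`, which is
`-s (Λ (α + 1) - λ (n - 1))` and vanishes exactly for the stated exponent.

The multiplicities are never computed: if a Hermitian matrix has all its eigenvalues in `{p, q}`,
then the Pucci summand agrees on the spectrum with an affine function, so its sum depends only
on the trace and on `n` (`pucciMinus_of_two_eigenvalues`).
-/

open MeasureTheory Real Set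

noncomputable section

/-- The Hessian matrix of a function `φ : ℝⁿ → ℝ` at a point `x`. -/
def hessianMatrix {n : ℕ} (φ : EuclideanSpace ℝ (Fin n) → ℝ)
    (x : EuclideanSpace ℝ (Fin n)) : Matrix (Fin n) (Fin n) ℝ :=
  Matrix.of fun i j =>
    iteratedFDeriv ℝ 2 φ x ![EuclideanSpace.single i 1, EuclideanSpace.single j 1]

/-- The Laplacian of `φ : ℝⁿ → ℝ`: the trace of the Hessian. -/
def lap {n : ℕ} (φ : EuclideanSpace ℝ (Fin n) → ℝ) (x : EuclideanSpace ℝ (Fin n)) : ℝ :=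
  (hessianMatrix φ x).trace

/-- Hypothesis (H1): uniform ellipticity with constants `0 < lam ≤ Lam`. -/
def SatisfiesH1 {n : ℕ} (lam Lam : ℝ) (F : Matrix (Fin n) (Fin n) ℝ → ℝ) : Prop :=
  ∀ M N : Matrix (Fin n) (Fin n) ℝ, M.IsSymm → N.IsSymm → N.PosSemidef →
    lam * N.trace ≤ F (M - N) - F M ∧ F (M - N) - F M ≤ Lam * N.trace

/-- Hypothesis (H2): positive homogeneity. -/
def SatisfiesH2 {n : ℕ} (F : Matrix (Fin n) (Fin n) ℝ → ℝ) : Prop :=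
  ∀ t : ℝ, 0 ≤ t → ∀ M : Matrix (Fin n) (Fin n) ℝ, M.IsSymm → F (t • M) = t * F M

/-- `u` is a viscosity supersolution of `F(D²u) = g` in `Ω`. -/
def ViscositySupersolution {n : ℕ} (F : Matrix (Fin n) (Fin n) ℝ → ℝ)
    (Ω : Set (EuclideanSpace ℝ (Fin n))) (g u : EuclideanSpace ℝ (Fin n) → ℝ) : Prop :=
  ∀ x₀ ∈ Ω, ∀ φ : EuclideanSpace ℝ (Fin n) → ℝ, ContDiffAt ℝ 2 φ x₀ →
    IsLocalMinOn (fun x => u x - φ x) Ω x₀ → g x₀ ≤ F (hessianMatrix φ x₀)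

/-- `u` is a viscosity subsolution of `F(D²u) = g` in `Ω`. -/
def ViscositySubsolution {n : ℕ} (F : Matrix (Fin n) (Fin n) ℝ → ℝ)
    (Ω : Set (EuclideanSpace ℝ (Fin n))) (g u : EuclideanSpace ℝ (Fin n) → ℝ) : Prop :=
  ∀ x₀ ∈ Ω, ∀ φ : EuclideanSpace ℝ (Fin n) → ℝ, ContDiffAt ℝ 2 φ x₀ →
    IsLocalMaxOn (fun x => u x - φ x) Ω x₀ → F (hessianMatrix φ x₀) ≤ g x₀

/-- `u` is a viscosity solution of `F(D²u) = g` in `Ω`. -/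
def ViscositySolution {n : ℕ} (F : Matrix (Fin n) (Fin n) ℝ → ℝ)
    (Ω : Set (EuclideanSpace ℝ (Fin n))) (g u : EuclideanSpace ℝ (Fin n) → ℝ) : Prop :=
  ViscositySubsolution F Ω g u ∧ ViscositySupersolution F Ω g u

/-- `Φ` is a fundamental solution of `F` with scaling exponent `a`. -/
def IsFundamentalSolution {n : ℕ} (F : Matrix (Fin n) (Fin n) ℝ → ℝ)
    (Φ : EuclideanSpace ℝ (Fin n) → ℝ) (a : ℝ) : Prop :=
  ContinuousOn Φ {x : EuclideanSpace ℝ (Fin n) | x ≠ 0} ∧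
  (¬ ∃ c : ℝ, ∀ x : EuclideanSpace ℝ (Fin n), x ≠ 0 → Φ x = c) ∧
  ViscositySolution F {x : EuclideanSpace ℝ (Fin n) | x ≠ 0} (fun _ => 0) Φ ∧
  (a = 0 → ∀ σ : ℝ, 0 < σ → ∀ x : EuclideanSpace ℝ (Fin n), x ≠ 0 →
    Φ x = Φ (σ • x) + Real.log σ) ∧
  (a ≠ 0 → ∀ σ : ℝ, 0 < σ → ∀ x : EuclideanSpace ℝ (Fin n), x ≠ 0 →
    Φ x = σ ^ a * Φ (σ • x) ∧ 0 < a * Φ x)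

/-- `Ω ⊆ ℝⁿ` is an exterior domain. -/
def IsExteriorDomain {n : ℕ} (Ω : Set (EuclideanSpace ℝ (Fin n))) : Prop :=
  IsOpen Ω ∧ IsConnected Ω ∧ ∃ R : ℝ, 0 < R ∧
    (Metric.ball (0 : EuclideanSpace ℝ (Fin n)) R)ᶜ ⊆ Ω ∧
    Ω ⊆ {x : EuclideanSpace ℝ (Fin n) | x ≠ 0}

/-- The Pucci maximal operator `𝒫⁺_{lam,Lam}`, defined via the eigenvalues. -/
def pucciPlus {n : ℕ} (lam Lam : ℝ) (M : Matrix (Fin n) (Fin n) ℝ) : ℝ :=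
  if hM : M.IsHermitian then
    -(lam * ∑ j ∈ Finset.univ.filter fun j => 0 < hM.eigenvalues j, hM.eigenvalues j)
      - Lam * ∑ j ∈ Finset.univ.filter fun j => hM.eigenvalues j < 0, hM.eigenvalues j
  else 0

/-- The Pucci minimal operator `𝒫⁻_{lam,Lam}`, defined via the eigenvalues. -/
def pucciMinus {n : ℕ} (lam Lam : ℝ) (M : Matrix (Fin n) (Fin n) ℝ) : ℝ :=
  if hM : M.IsHermitian then
    -(Lam * ∑ j ∈ Finset.univ.filter fun j => 0 < hM.eigenvalues j, hM.eigenvalues j)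
      - lam * ∑ j ∈ Finset.univ.filter fun j => hM.eigenvalues j < 0, hM.eigenvalues j
  else 0

/-- The radial functions `ξ_α`. -/
def xiFun {n : ℕ} (α : ℝ) (x : EuclideanSpace ℝ (Fin n)) : ℝ :=
  if 0 < α then ‖x‖ ^ (-α) else if α = 0 then -Real.log ‖x‖ else -(‖x‖ ^ (-α))

end

/-- The Pucci minimal operator of a matrix whose spectrum lies in `{p, q}`, `q < 0 < p`, and whose
trace is the one for which `p` is a simple eigenvalue. -/
lemma pucciMinus_of_two_eigenvalues {n : ℕ} (lam Lam p q : ℝ) (hp : 0 < p) (hq : q < 0)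
    (M : Matrix (Fin n) (Fin n) ℝ) (hM : M.IsHermitian)
    (hev : ∀ j, hM.eigenvalues j = p ∨ hM.eigenvalues j = q)
    (htr : M.trace = p + ((n : ℝ) - 1) * q) :
    pucciMinus lam Lam M = -(Lam * p + lam * (((n : ℝ) - 1) * q)) := by
  have hsum : ∑ j, hM.eigenvalues j = p + ((n : ℝ) - 1) * q := by
    rw [← htr, hM.trace_eq_sum_eigenvalues]; simp
  rw [pucciMinus, dif_pos hM, Finset.sum_filter, Finset.sum_filter]
  have hpq : p - q ≠ 0 := by linarith
  -- On `{p, q}` the function `μ ↦ Lam * μ⁺ - lam * μ⁻` is interpolated by an affine function.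
  have key : ∀ j, (p - q) * (Lam * (if 0 < hM.eigenvalues j then hM.eigenvalues j else 0)
      + lam * (if hM.eigenvalues j < 0 then hM.eigenvalues j else 0))
      = (Lam * p - lam * q) * hM.eigenvalues j + p * q * (lam - Lam) := by
    intro j
    rcases hev j with h | h <;> rw [h]
    · rw [if_pos hp, if_neg hp.not_gt]; ring
    · rw [if_neg hq.not_gt, if_pos hq]; ring
  have hs := Finset.sum_congr (rfl : (Finset.univ : Finset (Fin n)) = Finset.univ)
    (fun j _ => key j)
  rw [← Finset.mul_sum, Finset.sum_add_distrib, Finset.sum_add_distrib, ← Finset.mul_sum,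
    ← Finset.mul_sum, ← Finset.mul_sum, hsum] at hs
  simp only [Finset.sum_const, Finset.card_univ, Fintype.card_fin, nsmul_eq_mul] at hs
  apply mul_left_cancel₀ hpq
  linear_combination -hs

lemma hasFDerivAt_norm_rpow_of_ne {n : ℕ} (p : ℝ) {x : EuclideanSpace ℝ (Fin n)} (hx : x ≠ 0) :
    HasFDerivAt (fun y : EuclideanSpace ℝ (Fin n) => ‖y‖ ^ p)
      ((p * ‖x‖ ^ (p - 2)) • innerSL ℝ x) x := by
  have hpos : 0 < ‖x‖ := norm_pos_iff.mpr hx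
  have h1 := (hasStrictFDerivAt_norm_sq x).hasFDerivAt.rpow_const (p := p / 2)
    (Or.inl (by positivity))
  have e : ∀ (y : EuclideanSpace ℝ (Fin n)) (t : ℝ), (‖y‖ ^ 2) ^ t = ‖y‖ ^ (2 * t) := by
    intro y t
    rw [← Real.rpow_natCast, ← Real.rpow_mul (norm_nonneg _)]; norm_num
  simp only [e, mul_div_cancel₀ p (two_ne_zero (α := ℝ))] at h1
  refine h1.congr_fderiv ?_
  have : 2 * (p / 2 - 1) = p - 2 := by ring
  ext v
  simp [this]
  ring

/-- The positive factor `|α|` (or `1` when `α = 0`) in the gradient of `ξ_α`. -/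
noncomputable def xiCoef (α : ℝ) : ℝ := if α = 0 then 1 else |α|

lemma xiCoef_pos (α : ℝ) : 0 < xiCoef α := by
  unfold xiCoef
  split_ifs with h
  · exact one_pos
  · exact abs_pos.mpr h

lemma hasFDerivAt_xiFun {n : ℕ} (α : ℝ) {x : EuclideanSpace ℝ (Fin n)} (hx : x ≠ 0) :
    HasFDerivAt (xiFun α : EuclideanSpace ℝ (Fin n) → ℝ)
      ((-xiCoef α * ‖x‖ ^ (-α - 2)) • innerSL ℝ x) x := by
  have hpos : 0 < ‖x‖ := norm_pos_iff.mpr hx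
  rcases lt_trichotomy α 0 with h | h | h
  · have e : (xiFun α : EuclideanSpace ℝ (Fin n) → ℝ) = fun y => -(‖y‖ ^ (-α)) := by
      funext y; simp [xiFun, h.not_gt, h.ne]
    rw [e]
    refine (hasFDerivAt_norm_rpow_of_ne (-α) hx).neg.congr_fderiv ?_
    rw [xiCoef, if_neg h.ne, abs_of_neg h, ← neg_smul]
    congr 1; ring
  · subst h
    have e : (xiFun 0 : EuclideanSpace ℝ (Fin n) → ℝ)
        = fun y => -((1 / 2) * Real.log (‖y‖ ^ 2)) := by
      funext y; simp [xiFun]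
    rw [e]
    refine (((hasStrictFDerivAt_norm_sq x).hasFDerivAt.log (by positivity)).const_mul
      (1 / 2 : ℝ)).neg.congr_fderiv ?_
    have : ‖x‖ ^ (-0 - 2 : ℝ) = (‖x‖ ^ 2)⁻¹ := by
      rw [show (-0 - 2 : ℝ) = -(2 : ℕ) by norm_num, Real.rpow_neg hpos.le, Real.rpow_natCast]
    rw [this]
    ext v
    simp [xiCoef]
    ring
  · have e : (xiFun α : EuclideanSpace ℝ (Fin n) → ℝ) = fun y => ‖y‖ ^ (-α) := by
      funext y; simp [xiFun, h]
    rw [e]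
    refine (hasFDerivAt_norm_rpow_of_ne (-α) hx).congr_fderiv ?_
    rw [xiCoef, if_neg h.ne', abs_of_pos h]

lemma hessianMatrix_xiFun {n : ℕ} (α : ℝ) {x : EuclideanSpace ℝ (Fin n)} (hx : x ≠ 0)
    (i j : Fin n) :
    hessianMatrix (xiFun α) x i j = xiCoef α * ‖x‖ ^ (-α - 2) *
      ((α + 2) / ‖x‖ ^ 2 * (x i * x j) - if i = j then 1 else 0) := by
  have hpos : 0 < ‖x‖ := norm_pos_iff.mpr hx
  have hev : fderiv ℝ (xiFun α : EuclideanSpace ℝ (Fin n) → ℝ) =ᶠ[nhds x]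
      fun y => (-xiCoef α * ‖y‖ ^ (-α - 2)) • innerSL ℝ y := by
    filter_upwards [isOpen_ne.mem_nhds hx] with y hy
    exact (hasFDerivAt_xiFun α hy).fderiv
  have h2 : HasFDerivAt
      (fun y : EuclideanSpace ℝ (Fin n) => (-xiCoef α * ‖y‖ ^ (-α - 2)) • innerSL ℝ y) _ x :=
    ((hasFDerivAt_norm_rpow_of_ne (-α - 2) hx).const_mul (-xiCoef α)).smul
      (innerSL ℝ (E := EuclideanSpace ℝ (Fin n))).hasFDerivAt
  have hr : ‖x‖ ^ (-α - 2 - 2) = ‖x‖ ^ (-α - 2) / ‖x‖ ^ 2 := by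
    rw [Real.rpow_sub hpos, Real.rpow_two]
  have hxk : ∀ k, innerSL ℝ x (EuclideanSpace.single k (1 : ℝ)) = x k := fun k => by
    simp [EuclideanSpace.inner_single_right]
  have hij : innerSL ℝ (EuclideanSpace.single i (1 : ℝ)) (EuclideanSpace.single j (1 : ℝ))
      = if i = j then (1 : ℝ) else 0 := by
    simp [EuclideanSpace.inner_single_right, eq_comm]
  have h3 : hessianMatrix (xiFun α) x i j = (-xiCoef α * ‖x‖ ^ (-α - 2)) *
      innerSL ℝ (EuclideanSpace.single i (1 : ℝ)) (EuclideanSpace.single j (1 : ℝ)) +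
      (-xiCoef α * ((-α - 2) * ‖x‖ ^ (-α - 2 - 2) *
        innerSL ℝ x (EuclideanSpace.single i (1 : ℝ)))) *
        innerSL ℝ x (EuclideanSpace.single j (1 : ℝ)) := by
    rw [hessianMatrix, Matrix.of_apply, iteratedFDeriv_two_apply, hev.fderiv_eq, h2.fderiv]
    rfl
  rw [h3, hxk, hxk, hij, hr]
  field_simp
  ring

lemma contDiffOn_xiFun {n : ℕ} (α : ℝ) :
    ContDiffOn ℝ (⊤ : ℕ∞) (xiFun α : EuclideanSpace ℝ (Fin n) → ℝ)
      {x : EuclideanSpace ℝ (Fin n) | x ≠ 0} := by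
  intro x hx
  have hx : x ≠ 0 := hx
  have hn : ContDiffAt ℝ (⊤ : ℕ∞) (fun y : EuclideanSpace ℝ (Fin n) => ‖y‖) x :=
    contDiffAt_norm ℝ hx
  have h0 : ‖x‖ ≠ 0 := norm_ne_zero_iff.mpr hx
  apply ContDiffAt.contDiffWithinAt
  unfold xiFun
  split_ifs
  · exact hn.rpow_const_of_ne h0
  · exact (hn.log h0).neg
  · exact (hn.rpow_const_of_ne h0).neg

lemma pucciMinus_hessianMatrix_xiFun {n : ℕ} (lam Lam α : ℝ) (hα : -1 < α)
    {x : EuclideanSpace ℝ (Fin n)} (hx : x ≠ 0) :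
    pucciMinus lam Lam (hessianMatrix (xiFun α) x) =
      -(xiCoef α * ‖x‖ ^ (-α - 2) * (Lam * (α + 1) - lam * ((n : ℝ) - 1))) := by
  have hpos : 0 < ‖x‖ := norm_pos_iff.mpr hx
  have hH := hessianMatrix_xiFun α hx
  have hs : 0 < xiCoef α * ‖x‖ ^ (-α - 2) := mul_pos (xiCoef_pos α) (by positivity)
  generalize xiCoef α * ‖x‖ ^ (-α - 2) = s at hH hs ⊢
  generalize hessianMatrix (xiFun α) x = M at hH ⊢
  have hnorm : ∑ i, x i * x i = ‖x‖ ^ 2 := by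
    rw [EuclideanSpace.real_norm_sq_eq]; simp [sq]
  have hM : M.IsHermitian := by
    ext i j
    simp [Matrix.conjTranspose_apply, hH, eq_comm, mul_comm]
  rw [pucciMinus_of_two_eigenvalues lam Lam (s * (α + 1)) (-s) (mul_pos hs (by linarith))
    (by linarith) M hM]
  · ring
  · intro k
    set v : Fin n → ℝ := (hM.eigenvectorBasis k).ofLp with hv
    have hMv : ∀ i, s * ((α + 2) / ‖x‖ ^ 2 * x i * (∑ j, x j * v j) - v i)
        = hM.eigenvalues k * v i := by
      intro i
      have := congrFun (hM.mulVec_eigenvectorBasis k) i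
      simp only [Matrix.mulVec, dotProduct, hH, Pi.smul_apply, smul_eq_mul] at this
      rw [← hv] at this
      rw [← this, Finset.mul_sum, mul_sub, Finset.mul_sum]
      simp only [mul_sub, sub_mul, Finset.sum_sub_distrib]
      congr 1
      · exact Finset.sum_congr rfl fun j _ => by ring
      · simp
    -- An eigenvector orthogonal to `x` has eigenvalue `-s`; for any other one, pair with `x`.
    by_cases hd : ∑ j, x j * v j = 0
    · right
      have hv0 : v ≠ 0 := by
        intro h
        apply hM.eigenvectorBasis.orthonormal.ne_zero k
        ext i
        exact congrFun h i
      obtain ⟨i, hi⟩ := Function.ne_iff.mp hv0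
      have := hMv i
      rw [hd] at this
      apply mul_right_cancel₀ (hi : v i ≠ 0)
      linarith
    · left
      apply mul_right_cancel₀ hd
      have h1 : ∑ i, x i * (s * ((α + 2) / ‖x‖ ^ 2 * x i * (∑ j, x j * v j) - v i))
          = ∑ i, x i * (hM.eigenvalues k * v i) :=
        Finset.sum_congr rfl fun i _ => by rw [hMv i]
      generalize hD : ∑ j, x j * v j = D at h1 ⊢
      have h2 : ∑ i, x i * (hM.eigenvalues k * v i) = hM.eigenvalues k * D := by
        rw [← hD, Finset.mul_sum]
        exact Finset.sum_congr rfl fun i _ => by ring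
      have h3 : ∑ i, x i * (s * ((α + 2) / ‖x‖ ^ 2 * x i * D - v i))
          = s * ((α + 2) / ‖x‖ ^ 2 * D) * ∑ i, x i * x i - s * D := by
        rw [← hD, Finset.mul_sum, Finset.mul_sum (a := s), ← Finset.sum_sub_distrib, hD]
        exact Finset.sum_congr rfl fun i _ => by ring
      rw [h2, h3, hnorm] at h1
      rw [← h1]
      field_simp
      ring
  · simp only [Matrix.trace, Matrix.diag, hH]
    rw [← Finset.mul_sum, Finset.sum_sub_distrib, ← Finset.mul_sum, hnorm]
    simp
    field_simp
    ring

theorem pucci_minus_radial_fundamental_exponent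
    (n : ℕ) (hn : 2 ≤ n) (lam Lam : ℝ) (hlam : 0 < lam) (hLam : lam ≤ Lam)
    (α : ℝ) (hα : -1 < α) :
    (ContDiffOn ℝ (⊤ : ℕ∞) (xiFun α : EuclideanSpace ℝ (Fin n) → ℝ)
        {x : EuclideanSpace ℝ (Fin n) | x ≠ 0} ∧
      ∀ x : EuclideanSpace ℝ (Fin n), x ≠ 0 →
        pucciMinus lam Lam (hessianMatrix (xiFun α) x) = 0) ↔
      α = (lam / Lam) * ((n : ℝ) - 1) - 1 := by
  have hL : 0 < Lam := hlam.trans_le hLam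
  have hα' : α = (lam / Lam) * ((n : ℝ) - 1) - 1 ↔ Lam * (α + 1) - lam * ((n : ℝ) - 1) = 0 := by
    rw [eq_sub_iff_add_eq, div_mul_eq_mul_div, eq_div_iff hL.ne', mul_comm, sub_eq_zero]
  rw [hα']
  constructor
  · rintro ⟨-, h⟩
    have hx : (EuclideanSpace.single (⟨0, by omega⟩ : Fin n) (1 : ℝ)) ≠ 0 := by simp
    have h1 := h _ hx
    rw [pucciMinus_hessianMatrix_xiFun lam Lam α hα hx, neg_eq_zero] at h1
    refine (mul_eq_zero.mp h1).resolve_left (mul_pos (xiCoef_pos α) ?_).ne'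
    exact Real.rpow_pos_of_pos (norm_pos_iff.mpr hx) _
  · intro h
    refine ⟨contDiffOn_xiFun α, fun x hx => ?_⟩
    rw [pucciMinus_hessianMatrix_xiFun lam Lam α hα hx, h, mul_zero, neg_zero]
end

section
/- Let n ≥ 2, 0 < λ ≤ Λ, let F : Sym_n → ℝ satisfy (H1) and (H2) with constants λ, Λ, and let p > 1. Suppose F admits a fundamental solution Φ with scaling exponent α* satisfying α* > 2/(p−1) (so in particular α* > 0 and Φ > 0). Then there exists a positive continuous function u : ℝⁿ → ℝ that is a viscosity supersolution of F(D²u) = u^p in ℝⁿ (that is, a viscosity supersolution of F(D²u) = g in ℝⁿ with g(x) = u(x)^p). -/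
open MeasureTheory Real Set

/-!
Write `q = p - 1` and let `w = Φ^{-2/a}`, extended by `0` at the origin: a continuous function,
positive and homogeneous of degree two off the origin, hence comparable to `‖x‖²`
(`exists_weight_bounds`). The supersolution is `ε (1 + w)^{-1/q}` with `ε` small. At infinity it
decays like `‖x‖^{-2/(p-1)}`, the critical rate, and near the origin it looks like a downward
paraboloid.

Put `u = (1 + w)^{-1/q}`. Off the origin, `Φ = G(u)` with `G(v) = (v^{-q} - 1)^{-a/2}`
(`changeVar`), which is increasing and, because `a > 2/(p-1)`, convex on `(0, 1)`. If `φ` touches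
`u` from below at `x ≠ 0`, then `G ∘ φ` touches `Φ` from below, so
`0 ≤ F(G' D²φ + G'' Dφ ⊗ Dφ)`, and ellipticity gives `F(D²φ) ≥ lam (G''/G') |Dφ|²`
(`le_F_hessianMatrix_of_comp`). Since `w` is homogeneous, `u` is explicit and smooth along rays,
which fixes the radial derivative of `φ` (`fderiv_radial_eq`). Inserting it, together with
`w ≥ c ‖x‖²`, bounds `F(D²φ)` below by a constant times `(1 + w)^{-1/q - 1} = u^p`
(`profile_supersolution_off_origin`). At the origin, `φ` lies below a downward paraboloid, so
`-D²φ` is bounded below by a positive multiple of the identity and `F(D²φ)` is bounded below by a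
positive constant (`profile_supersolution_at_origin`). Finally the constant is absorbed in `ε`,
because `F` is homogeneous of degree one and `p > 1`.
-/

/-! ### Hessians of test functions -/

lemma hessianMatrix_apply {n : ℕ} (φ : EuclideanSpace ℝ (Fin n) → ℝ)
    (x : EuclideanSpace ℝ (Fin n)) (i j : Fin n) :
    hessianMatrix φ x i j = fderiv ℝ (fderiv ℝ φ) x (EuclideanSpace.single i 1)
      (EuclideanSpace.single j 1) := by
  simp [hessianMatrix, iteratedFDeriv_two_apply]

lemma hessianMatrix_isSymm {n : ℕ} {φ : EuclideanSpace ℝ (Fin n) → ℝ}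
    {x : EuclideanSpace ℝ (Fin n)} (h : ContDiffAt ℝ 2 φ x) :
    (hessianMatrix φ x).IsSymm := by
  ext i j
  rw [Matrix.transpose_apply, hessianMatrix_apply, hessianMatrix_apply]
  exact h.isSymmSndFDerivAt (by simp) _ _

lemma hasFDerivAt_fderiv {n : ℕ} {φ : EuclideanSpace ℝ (Fin n) → ℝ}
    {x : EuclideanSpace ℝ (Fin n)} (h : ContDiffAt ℝ 2 φ x) :
    HasFDerivAt (fderiv ℝ φ) (fderiv ℝ (fderiv ℝ φ) x) x :=
  ((h.fderiv_right (m := 1) (by norm_num)).differentiableAt (by norm_num)).hasFDerivAt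

lemma eventually_hasFDerivAt {n : ℕ} {φ : EuclideanSpace ℝ (Fin n) → ℝ}
    {x : EuclideanSpace ℝ (Fin n)} (h : ContDiffAt ℝ 2 φ x) :
    ∀ᶠ y in nhds x, HasFDerivAt φ (fderiv ℝ φ y) y := by
  filter_upwards [h.eventually (by simp)] with y hy
  exact (hy.differentiableAt (by norm_num)).hasFDerivAt

/-- Second-order chain rule `D²(G ∘ φ) = G' D²φ + G'' Dφ ⊗ Dφ`. -/
lemma hessianMatrix_comp {n : ℕ} {φ : EuclideanSpace ℝ (Fin n) → ℝ}
    {x : EuclideanSpace ℝ (Fin n)} (h : ContDiffAt ℝ 2 φ x) {G G1 : ℝ → ℝ} {G2 : ℝ}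
    (hG : ∀ᶠ v in nhds (φ x), HasDerivAt G (G1 v) v) (hG1 : HasDerivAt G1 G2 (φ x)) :
    hessianMatrix (G ∘ φ) x = G1 (φ x) • hessianMatrix φ x +
      G2 • Matrix.vecMulVec (fun i => fderiv ℝ φ x (EuclideanSpace.single i 1))
        (fun i => fderiv ℝ φ x (EuclideanSpace.single i 1)) := by
  have e1 : fderiv ℝ (G ∘ φ) =ᶠ[nhds x] fun y => G1 (φ y) • fderiv ℝ φ y := by
    filter_upwards [eventually_hasFDerivAt h, h.continuousAt.eventually hG] with y hy hgy
    exact (hgy.comp_hasFDerivAt y hy).fderiv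
  have e2 : HasFDerivAt (fun y => G1 (φ y)) (G2 • fderiv ℝ φ x) x :=
    hG1.comp_hasFDerivAt x (eventually_hasFDerivAt h).self_of_nhds
  have e3 := e2.fun_smul (hasFDerivAt_fderiv h)
  ext i j
  rw [hessianMatrix_apply, e1.fderiv_eq, e3.fderiv]
  simp [hessianMatrix_apply, Matrix.vecMulVec_apply]
  ring

lemma hessianMatrix_affine {n : ℕ} {φ : EuclideanSpace ℝ (Fin n) → ℝ}
    {x : EuclideanSpace ℝ (Fin n)} (h : ContDiffAt ℝ 2 φ x) (c d : ℝ) :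
    hessianMatrix (fun y => c * φ y + d) x = c • hessianMatrix φ x := by
  have h1 := hessianMatrix_comp h (G := fun v => c * v + d) (G1 := fun _ => c) (G2 := 0)
    (Filter.Eventually.of_forall fun v => by
      simpa using ((hasDerivAt_id v).const_mul c).add_const d)
    (hasDerivAt_const _ _)
  simpa [Function.comp_def] using h1

lemma dotProduct_hessianMatrix_mulVec {n : ℕ} (φ : EuclideanSpace ℝ (Fin n) → ℝ)
    (x v : EuclideanSpace ℝ (Fin n)) :
    v.ofLp ⬝ᵥ (hessianMatrix φ x).mulVec v.ofLp = fderiv ℝ (fderiv ℝ φ) x v v := by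
  have hv : v = ∑ i, v i • EuclideanSpace.single i (1 : ℝ) := by
    simpa using ((EuclideanSpace.basisFun (Fin n) ℝ).sum_repr v).symm
  conv_rhs => rw [hv]
  simp only [map_sum, map_smul, sum_apply, smul_apply,
    smul_eq_mul, dotProduct, Matrix.mulVec, hessianMatrix_apply, Finset.mul_sum]
  rw [Finset.sum_comm]
  refine Finset.sum_congr rfl fun i _ => Finset.sum_congr rfl fun j _ => ?_
  ring

lemma sq_fderiv_le {n : ℕ} (L : EuclideanSpace ℝ (Fin n) →L[ℝ] ℝ)
    (x : EuclideanSpace ℝ (Fin n)) :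
    (L x) ^ 2 ≤ (∑ i, (L (EuclideanSpace.single i 1)) ^ 2) * ‖x‖ ^ 2 := by
  have hv : x = ∑ i, x i • EuclideanSpace.single i (1 : ℝ) := by
    simpa using ((EuclideanSpace.basisFun (Fin n) ℝ).sum_repr x).symm
  have h1 : L x = ∑ i, L (EuclideanSpace.single i 1) * x i := by
    conv_lhs => rw [hv]
    simp [mul_comm]
  rw [h1, EuclideanSpace.norm_sq_eq]
  simpa using Finset.sum_mul_sq_le_sq_mul_sq Finset.univ
    (fun i => L (EuclideanSpace.single i 1)) (fun i => x i)

/-- Second-order necessary condition for a one-variable local maximum. -/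
lemma second_deriv_nonpos_of_isLocalMax {g g1 : ℝ → ℝ} {g2 : ℝ} (hmax : IsLocalMax g 0)
    (hg : ∀ᶠ t in nhds (0 : ℝ), HasDerivAt g (g1 t) t) (hg1 : HasDerivAt g1 g2 0) : g2 ≤ 0 := by
  by_contra! hpos
  have e1 : deriv g =ᶠ[nhds 0] g1 := hg.mono fun t ht => ht.deriv
  have e2 : deriv (deriv g) 0 = g2 := by rw [e1.deriv_eq, hg1.deriv]
  have hmin := isLocalMin_of_deriv_deriv_pos (by rw [e2]; exact hpos) hmax.deriv_eq_zero
    hg.self_of_nhds.continuousAt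
  -- A point that is both a local minimum and a local maximum forces `g` to be locally constant.
  have hc : g =ᶠ[nhds 0] fun _ => g 0 := by
    filter_upwards [hmin, hmax] with t h1 h2 using le_antisymm h2 h1
  have e3 : deriv g =ᶠ[nhds 0] fun _ => 0 := by
    simpa using hc.deriv
  rw [e3.deriv_eq] at e2
  simp at e2
  linarith

/-- If `φ - φ 0` lies below a downward paraboloid with vertex at the origin, then `D²φ(0)` is
bounded above by the Hessian of that paraboloid. -/
lemma hessianMatrix_le_of_paraboloid {n : ℕ} {φ : EuclideanSpace ℝ (Fin n) → ℝ} {c : ℝ}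
    (h : ContDiffAt ℝ 2 φ 0) (hle : ∀ᶠ x in nhds 0, φ x - φ 0 ≤ -(c * ‖x‖ ^ 2))
    (v : EuclideanSpace ℝ (Fin n)) :
    fderiv ℝ (fderiv ℝ φ) 0 v v ≤ -(2 * c * ‖v‖ ^ 2) := by
  have hl (t : ℝ) : HasDerivAt (fun t : ℝ => t • v) v t := by
    simpa using (hasDerivAt_id t).smul_const v
  have ht : Filter.Tendsto (fun t : ℝ => t • v) (nhds 0) (nhds 0) := by
    simpa using (hl 0).continuousAt.tendsto
  have hmax : IsLocalMax (fun t : ℝ => φ (t • v) + c * ‖v‖ ^ 2 * t ^ 2) 0 := by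
    filter_upwards [ht.eventually hle] with t h1
    rw [norm_smul, mul_pow, Real.norm_eq_abs, sq_abs] at h1
    simp only [zero_smul]
    nlinarith
  have hg : ∀ᶠ t in nhds (0 : ℝ), HasDerivAt (fun t : ℝ => φ (t • v) + c * ‖v‖ ^ 2 * t ^ 2)
      (fderiv ℝ φ (t • v) v + c * ‖v‖ ^ 2 * (2 * t)) t := by
    filter_upwards [ht.eventually (eventually_hasFDerivAt h)] with t h1
    have h2 : HasDerivAt (fun t : ℝ => φ (t • v)) (fderiv ℝ φ (t • v) v) t :=
      h1.comp_hasDerivAt t (hl t)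
    have h3 : HasDerivAt (fun t : ℝ => c * ‖v‖ ^ 2 * t ^ 2) (c * ‖v‖ ^ 2 * (2 * t)) t := by
      simpa using (hasDerivAt_pow 2 t).const_mul (c * ‖v‖ ^ 2)
    exact h2.fun_add h3
  have hg1 : HasDerivAt (fun t : ℝ => fderiv ℝ φ (t • v) v + c * ‖v‖ ^ 2 * (2 * t))
      (fderiv ℝ (fderiv ℝ φ) 0 v v + c * ‖v‖ ^ 2 * 2) 0 := by
    have h0 : HasFDerivAt (fderiv ℝ φ) (fderiv ℝ (fderiv ℝ φ) 0) ((0 : ℝ) • v) := by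
      simpa using hasFDerivAt_fderiv h
    have h1 : HasDerivAt (fun t : ℝ => fderiv ℝ φ (t • v)) (fderiv ℝ (fderiv ℝ φ) 0 v) 0 :=
      h0.comp_hasDerivAt (0 : ℝ) (hl 0)
    have h2 : HasDerivAt (fun t : ℝ => fderiv ℝ φ (t • v) v) (fderiv ℝ (fderiv ℝ φ) 0 v v) 0 :=
      (ContinuousLinearMap.apply ℝ ℝ v).hasFDerivAt.comp_hasDerivAt (0 : ℝ) h1
    have h3 : HasDerivAt (fun t : ℝ => c * ‖v‖ ^ 2 * (2 * t)) (c * ‖v‖ ^ 2 * 2) 0 := by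
      simpa using ((hasDerivAt_id (0 : ℝ)).const_mul 2).const_mul (c * ‖v‖ ^ 2)
    exact h2.fun_add h3
  have := second_deriv_nonpos_of_isLocalMax hmax hg hg1
  linarith

/-- If `φ - φ 0` lies below `-c ‖x‖²` near the origin, ellipticity bounds `F(D²φ(0))` below by
`lam` times the trace of `2c I`. -/
lemma le_F_hessianMatrix_of_paraboloid {n : ℕ} {lam Lam : ℝ}
    {F : Matrix (Fin n) (Fin n) ℝ → ℝ} (hlam : 0 < lam) (hF1 : SatisfiesH1 lam Lam F)
    (hF2 : SatisfiesH2 F) {φ : EuclideanSpace ℝ (Fin n) → ℝ} {c : ℝ} (hc : 0 ≤ c)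
    (h : ContDiffAt ℝ 2 φ 0) (hle : ∀ᶠ x in nhds 0, φ x - φ 0 ≤ -(c * ‖x‖ ^ 2)) :
    lam * (n * (2 * c)) ≤ F (hessianMatrix φ 0) := by
  have hs := hessianMatrix_isSymm h
  have hpsd : (-hessianMatrix φ 0).PosSemidef := by
    refine Matrix.PosSemidef.of_dotProduct_mulVec_nonneg ?_ fun x => ?_
    · simpa [Matrix.IsHermitian, Matrix.conjTranspose_eq_transpose_of_trivial] using hs.eq
    · have h1 := dotProduct_hessianMatrix_mulVec φ 0 (WithLp.toLp 2 x)
      have h2 := hessianMatrix_le_of_paraboloid h hle (WithLp.toLp 2 x)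
      simp only [star_trivial, Matrix.neg_mulVec, dotProduct_neg]
      rw [← h1] at h2
      have : 0 ≤ 2 * c * ‖WithLp.toLp 2 x‖ ^ 2 := by positivity
      simp only at h2
      linarith
  have htr : n * (2 * c) ≤ (-hessianMatrix φ 0).trace := by
    have : ∑ _i : Fin n, (2 * c) ≤ ∑ i, (-hessianMatrix φ 0) i i := by
      refine Finset.sum_le_sum fun i _ => ?_
      have h2 := hessianMatrix_le_of_paraboloid h hle (EuclideanSpace.single i 1)
      simp only [PiLp.norm_single, norm_one, one_pow, mul_one] at h2
      rw [Matrix.neg_apply, hessianMatrix_apply]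
      linarith
    simpa [Matrix.trace] using this
  have h0 : F 0 = 0 := by simpa using hF2 0 le_rfl 0 Matrix.isSymm_zero
  have h1 := (hF1 0 (-hessianMatrix φ 0) Matrix.isSymm_zero hs.neg hpsd).1
  rw [h0] at h1
  simp only [sub_neg_eq_add, zero_add, sub_zero] at h1
  exact (mul_le_mul_of_nonneg_left htr hlam.le).trans h1

/-- Ellipticity along a convex change of variable: if `F(D²(G ∘ φ)) ≥ 0` with `G` increasing and
convex, the rank-one term `G'' Dφ ⊗ Dφ` gives a positive lower bound for `F(D²φ)`. -/
lemma le_F_hessianMatrix_of_comp {n : ℕ} {lam Lam : ℝ}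
    {F : Matrix (Fin n) (Fin n) ℝ → ℝ} (hF1 : SatisfiesH1 lam Lam F)
    (hF2 : SatisfiesH2 F) {φ : EuclideanSpace ℝ (Fin n) → ℝ}
    {x : EuclideanSpace ℝ (Fin n)} (h : ContDiffAt ℝ 2 φ x) {G G1 : ℝ → ℝ} {G2 : ℝ}
    (hG : ∀ᶠ v in nhds (φ x), HasDerivAt G (G1 v) v) (hG1 : HasDerivAt G1 G2 (φ x))
    (hG1pos : 0 < G1 (φ x)) (hG2 : 0 ≤ G2) (hGφ : ContDiffAt ℝ 2 (G ∘ φ) x)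
    (hF : 0 ≤ F (hessianMatrix (G ∘ φ) x)) :
    lam * (G2 / G1 (φ x) * ∑ i, (fderiv ℝ φ x (EuclideanSpace.single i 1)) ^ 2) ≤
      F (hessianMatrix φ x) := by
  set d : Fin n → ℝ := fun i => fderiv ℝ φ x (EuclideanSpace.single i 1) with hd
  have hN : (G2 • Matrix.vecMulVec d d).PosSemidef := by
    have := Matrix.posSemidef_vecMulVec_self_star d
    rw [star_trivial] at this
    exact this.smul hG2
  have hNs : (G2 • Matrix.vecMulVec d d).IsSymm := by
    rw [Matrix.IsSymm, Matrix.transpose_smul, Matrix.transpose_vecMulVec]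
  have h1 := (hF1 _ _ (hessianMatrix_isSymm hGφ) hNs hN).1
  rw [hessianMatrix_comp h hG hG1] at h1 hF
  rw [add_sub_cancel_right, hF2 _ hG1pos.le _ (hessianMatrix_isSymm h), Matrix.trace_smul,
    Matrix.trace_vecMulVec] at h1
  have h2 : d ⬝ᵥ d = ∑ i, (d i) ^ 2 := by simp [dotProduct, sq]
  rw [h2, smul_eq_mul] at h1
  have h3 : lam * (G2 * ∑ i, (d i) ^ 2) ≤ G1 (φ x) * F (hessianMatrix φ x) := by linarith
  have h4 : lam * (G2 / G1 (φ x) * ∑ i, (d i) ^ 2)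
      = (lam * (G2 * ∑ i, (d i) ^ 2)) / G1 (φ x) := by ring
  rw [h4, div_le_iff₀ hG1pos]
  linarith

/-! ### The change of variable -/

/-- The convex function `G` with `Φ = G(u)`, where `u = (1 + Φ^{-1/b})^{-1/q}`; it is used on
`(0, 1)`. -/
noncomputable def changeVar (b q v : ℝ) : ℝ := (v ^ (-q) - 1) ^ (-b)

/-- The derivative of `changeVar b q` on `(0, 1)`. -/
noncomputable def changeVar' (b q v : ℝ) : ℝ := b * q * v ^ (-q - 1) * (v ^ (-q) - 1) ^ (-b - 1)

lemma rpow_neg_sub_one_pos {q v : ℝ} (hq : 0 < q) (hv0 : 0 < v) (hv1 : v < 1) :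
    0 < v ^ (-q) - 1 :=
  sub_pos.2 (Real.one_lt_rpow_of_pos_of_lt_one_of_neg hv0 hv1 (by linarith))

lemma hasDerivAt_changeVar {b q v : ℝ} (hq : 0 < q) (hv0 : 0 < v) (hv1 : v < 1) :
    HasDerivAt (changeVar b q) (changeVar' b q v) v := by
  have hs := rpow_neg_sub_one_pos hq hv0 hv1
  have h1 : HasDerivAt (fun v : ℝ => v ^ (-q) - 1) (-q * v ^ (-q - 1)) v :=
    (Real.hasDerivAt_rpow_const (Or.inl hv0.ne')).sub_const 1
  have h2 := h1.rpow_const (p := -b) (Or.inl hs.ne')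
  refine h2.congr_deriv ?_
  unfold changeVar'
  ring

lemma changeVar'_pos {b q v : ℝ} (hb : 0 < b) (hq : 0 < q) (hv0 : 0 < v) (hv1 : v < 1) :
    0 < changeVar' b q v := by
  have hs := rpow_neg_sub_one_pos hq hv0 hv1
  unfold changeVar'
  positivity

/-- The second derivative of `changeVar`, expressed as a multiple of the first. -/
lemma hasDerivAt_changeVar' {b q v : ℝ} (hq : 0 < q) (hv0 : 0 < v) (hv1 : v < 1) :
    HasDerivAt (changeVar' b q) (changeVar' b q v *
      (((b * q - 1) * v ^ (-q) + (q + 1)) / (v * (v ^ (-q) - 1)))) v := by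
  have hs := rpow_neg_sub_one_pos hq hv0 hv1
  have h1 : HasDerivAt (fun v : ℝ => v ^ (-q) - 1) (-q * v ^ (-q - 1)) v :=
    (Real.hasDerivAt_rpow_const (Or.inl hv0.ne')).sub_const 1
  have h2 := h1.rpow_const (p := -b - 1) (Or.inl hs.ne')
  have h3 : HasDerivAt (fun v : ℝ => b * q * v ^ (-q - 1))
      (b * q * ((-q - 1) * v ^ (-q - 1 - 1))) v :=
    (Real.hasDerivAt_rpow_const (Or.inl hv0.ne')).const_mul _
  refine (h3.fun_mul h2).congr_deriv ?_
  unfold changeVar'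
  rw [Real.rpow_sub_one hs.ne' (-b - 1), Real.rpow_sub_one hv0.ne' (-q - 1),
    Real.rpow_sub_one hv0.ne' (-q)]
  set s := v ^ (-q) - 1 with hsdef
  have hv : v ^ (-q) = s + 1 := by rw [hsdef]; ring
  rw [hv]
  field_simp
  ring

lemma changeVar_le_changeVar {b q v v' : ℝ} (hb : 0 < b) (hq : 0 < q) (hv0 : 0 < v)
    (h : v ≤ v') (hv1 : v' < 1) : changeVar b q v ≤ changeVar b q v' := by
  have hs := rpow_neg_sub_one_pos hq (hv0.trans_le h) hv1
  have h1 : v' ^ (-q) ≤ v ^ (-q) := Real.rpow_le_rpow_of_nonpos hv0 h (by linarith)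
  exact Real.rpow_le_rpow_of_nonpos hs (by linarith) (by linarith)

lemma contDiffAt_changeVar_comp {n : ℕ} {φ : EuclideanSpace ℝ (Fin n) → ℝ}
    {x : EuclideanSpace ℝ (Fin n)} (h : ContDiffAt ℝ 2 φ x) {b q : ℝ} (hq : 0 < q)
    (h0 : 0 < φ x) (h1 : φ x < 1) : ContDiffAt ℝ 2 (changeVar b q ∘ φ) x := by
  have hs := rpow_neg_sub_one_pos hq h0 h1
  exact ((h.rpow_const_of_ne h0.ne').sub contDiffAt_const).rpow_const_of_ne hs.ne'

lemma rpow_profile_rpow {q w : ℝ} (hq : 0 < q) (hw : 0 ≤ w) (r : ℝ) :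
    ((1 + w) ^ (-q⁻¹)) ^ (q * r) = (1 + w) ^ (-r) := by
  rw [← Real.rpow_mul (by linarith)]
  congr 1
  field_simp

lemma profile_pos {q w : ℝ} (hw : 0 ≤ w) : 0 < (1 + w) ^ (-q⁻¹) :=
  Real.rpow_pos_of_pos (by linarith) _

lemma profile_lt_one {q w : ℝ} (hq : 0 < q) (hw : 0 < w) : (1 + w) ^ (-q⁻¹) < 1 :=
  Real.rpow_lt_one_of_one_lt_of_neg (by linarith) (by simpa using hq)

lemma profile_rpow_neg {q w : ℝ} (hq : 0 < q) (hw : 0 ≤ w) :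
    ((1 + w) ^ (-q⁻¹)) ^ (-q) = 1 + w := by
  have := rpow_profile_rpow hq hw (-1)
  simpa using this

/-- The profile lies below a downward paraboloid near the origin. -/
lemma profile_le {k y : ℝ} (hk : 0 < k) (hy0 : 0 ≤ y) (hy1 : y ≤ 1) :
    (1 + y) ^ (-k) ≤ 1 - k / (2 + k) * y := by
  have h1 : y / 2 ≤ Real.log (1 + y) := by
    have h := Real.one_sub_inv_le_log_of_pos (show 0 < 1 + y by linarith)
    have h' : 1 - (1 + y)⁻¹ = y / (1 + y) := by field_simp; ring
    rw [h'] at h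
    refine le_trans ?_ h
    exact div_le_div_of_nonneg_left hy0 (by linarith) (by linarith)
  rw [Real.rpow_def_of_pos (by linarith)]
  have h2 : Real.log (1 + y) * -k ≤ -(k * y / 2) := by nlinarith
  have h3 : Real.exp (-(k * y / 2)) ≤ (1 + k * y / 2)⁻¹ := by
    rw [Real.exp_neg]
    have : 0 ≤ k * y := by positivity
    apply inv_anti₀ (by linarith)
    linarith [Real.add_one_le_exp (k * y / 2)]
  refine (Real.exp_le_exp.2 h2).trans (h3.trans ?_)
  have hky : 0 ≤ k * y := by positivity
  rw [inv_le_iff_one_le_mul₀ (by linarith), ← sub_nonneg]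
  have : (1 - k / (2 + k) * y) * (1 + k * y / 2) - 1 = k ^ 2 * y * (1 - y) / (2 * (2 + k)) := by
    field_simp
    ring
  rw [this]
  have : 0 ≤ 1 - y := by linarith
  positivity

/-! ### The supersolution inequality before scaling -/

/-- Along rays the profile is explicit, so a test function touching it from below has a prescribed
radial derivative. -/
lemma fderiv_radial_eq {n : ℕ} {q : ℝ} {w φ : EuclideanSpace ℝ (Fin n) → ℝ}
    {x : EuclideanSpace ℝ (Fin n)} (hwx : 0 < w x)
    (hwhom : ∀ t : ℝ, 0 < t → w (t • x) = t ^ 2 * w x)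
    (hφ : ContDiffAt ℝ 2 φ x) (hmin : IsLocalMin (fun y => (1 + w y) ^ (-q⁻¹) - φ y) x) :
    fderiv ℝ φ x x = 2 * w x * -q⁻¹ * (1 + w x) ^ (-q⁻¹ - 1) := by
  have hl : HasDerivAt (fun t : ℝ => t • x) x 1 := by
    simpa using (hasDerivAt_id (1 : ℝ)).smul_const x
  have ht : Filter.Tendsto (fun t : ℝ => t • x) (nhds 1) (nhds x) := by
    simpa using hl.continuousAt.tendsto
  have hm : IsLocalMin (fun t : ℝ => (1 + t ^ 2 * w x) ^ (-q⁻¹) - φ (t • x)) 1 := by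
    filter_upwards [ht.eventually hmin, lt_mem_nhds (show (0 : ℝ) < 1 by norm_num)] with t h1 h2
    simpa [hwhom t h2] using h1
  have h1 : HasDerivAt (fun t : ℝ => φ (t • x)) (fderiv ℝ φ x x) 1 := by
    have h0 : HasFDerivAt φ (fderiv ℝ φ x) ((1 : ℝ) • x) := by
      simpa using (eventually_hasFDerivAt hφ).self_of_nhds
    exact h0.comp_hasDerivAt (1 : ℝ) hl
  have h2 : HasDerivAt (fun t : ℝ => 1 + t ^ 2 * w x) (2 * w x) 1 := by
    simpa using ((hasDerivAt_pow 2 (1 : ℝ)).mul_const (w x)).const_add 1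
  have h3 := h2.rpow_const (p := -q⁻¹) (Or.inl (by simp; linarith))
  have h4 := hm.hasDerivAt_eq_zero (h3.fun_sub h1)
  simp only [one_pow, one_mul] at h4
  linarith

/-- The differential inequality away from the origin. The exponent condition enters as
`1 < b * q`. -/
lemma profile_supersolution_off_origin {n : ℕ} {lam Lam : ℝ} (hlam : 0 < lam)
    {F : Matrix (Fin n) (Fin n) ℝ → ℝ} (hF1 : SatisfiesH1 lam Lam F) (hF2 : SatisfiesH2 F)
    {Φ w φ : EuclideanSpace ℝ (Fin n) → ℝ} {b q c : ℝ} (hb : 0 < b) (hq : 0 < q)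
    (hbq : 1 < b * q)
    (hΦ : ViscositySupersolution F {x : EuclideanSpace ℝ (Fin n) | x ≠ 0} (fun _ => 0) Φ)
    (hw : ∀ x, x ≠ 0 → 0 < w x) (hwΦ : ∀ x, x ≠ 0 → Φ x = w x ^ (-b))
    (hwhom : ∀ x, x ≠ 0 → ∀ t : ℝ, 0 < t → w (t • x) = t ^ 2 * w x)
    (hc : 0 ≤ c) (hwc : ∀ x, c * ‖x‖ ^ 2 ≤ w x)
    {x : EuclideanSpace ℝ (Fin n)} (hx : x ≠ 0) (hφ : ContDiffAt ℝ 2 φ x)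
    (heq : φ x = (1 + w x) ^ (-q⁻¹))
    (hmin : IsLocalMin (fun y => (1 + w y) ^ (-q⁻¹) - φ y) x) :
    lam * ((b * q - 1) * (4 * q⁻¹ ^ 2) * c) * φ x ^ (q + 1) ≤ F (hessianMatrix φ x) := by
  have hwx := hw x hx
  have hv0 : 0 < φ x := heq ▸ profile_pos hwx.le
  have hv1 : φ x < 1 := heq ▸ profile_lt_one hq hwx
  have hGu (y) (hy : y ≠ 0) : changeVar b q ((1 + w y) ^ (-q⁻¹)) = Φ y := by
    rw [changeVar, profile_rpow_neg hq (hw y hy).le, add_sub_cancel_left, hwΦ y hy]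
  have hcomp := contDiffAt_changeVar_comp (b := b) hφ hq hv0 hv1
  -- `changeVar b q ∘ φ` touches `Φ` from below at `x`.
  have hF : 0 ≤ F (hessianMatrix (changeVar b q ∘ φ) x) := by
    refine hΦ x hx _ hcomp ?_
    filter_upwards [self_mem_nhdsWithin, mem_nhdsWithin_of_mem_nhds hmin,
      mem_nhdsWithin_of_mem_nhds (hφ.continuousAt.eventually (lt_mem_nhds hv0))] with y h1 h2 h3
    have h4 := changeVar_le_changeVar (v' := (1 + w y) ^ (-q⁻¹)) hb hq h3
      (by simp only [← heq, sub_self] at h2; linarith) (profile_lt_one hq (hw y h1))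
    rw [hGu y h1] at h4
    simp only [Function.comp_apply]
    rw [heq, hGu x hx]
    linarith
  have hG : ∀ᶠ v in nhds (φ x), HasDerivAt (changeVar b q) (changeVar' b q v) v := by
    filter_upwards [lt_mem_nhds hv0, gt_mem_nhds hv1] with v h1 h2
      using hasDerivAt_changeVar hq h1 h2
  have hpos := changeVar'_pos hb hq hv0 hv1
  have hvq : φ x ^ (-q) = 1 + w x := by rw [heq, profile_rpow_neg hq hwx.le]
  have hbq' : 0 < b * q - 1 := by linarith
  have hG1 := hasDerivAt_changeVar' (b := b) hq hv0 hv1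
  rw [hvq, add_sub_cancel_left] at hG1
  have hmain := le_F_hessianMatrix_of_comp hF1 hF2 hφ hG hG1 hpos (by positivity) hcomp hF
  refine le_trans ?_ hmain
  rw [mul_assoc, mul_div_cancel_left₀ _ hpos.ne']
  refine mul_le_mul_of_nonneg_left ?_ hlam.le
  have hCS := sq_fderiv_le (fderiv ℝ φ x) x
  rw [fderiv_radial_eq hwx (hwhom x hx) hφ hmin, Real.rpow_sub_one (by positivity), ← heq] at hCS
  set S := ∑ i, (fderiv ℝ φ x (EuclideanSpace.single i 1)) ^ 2 with hS
  set v := φ x with hv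
  have hvq1 : v ^ (q + 1) = v / (1 + w x) := by
    rw [Real.rpow_add_one hv0.ne', ← hvq, Real.rpow_neg hv0.le]
    field_simp
  rw [hvq1]
  have hS0 : 0 ≤ S := Finset.sum_nonneg fun i _ => sq_nonneg _
  have hnx : 0 < ‖x‖ ^ 2 := by positivity
  have hcw := hwc x
  -- `S ≥ (4 w / q²) (w / ‖x‖²) v² / (1 + w)²`, and `w / ‖x‖² ≥ c`.
  have hS1 : 4 * q⁻¹ ^ 2 * c * (w x) * (v / (1 + w x)) ^ 2 ≤ S := by
    refine le_of_mul_le_mul_right (le_trans ?_ hCS) hnx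
    have : (2 * w x * -q⁻¹ * (v / (1 + w x))) ^ 2
        = 4 * q⁻¹ ^ 2 * w x * (v / (1 + w x)) ^ 2 * w x := by ring
    rw [this]
    have h5 : 0 ≤ 4 * q⁻¹ ^ 2 * w x * (v / (1 + w x)) ^ 2 := by positivity
    nlinarith [mul_le_mul_of_nonneg_left hcw h5]
  have hR : (b * q - 1) * (1 + w x) / (v * w x)
      ≤ ((b * q - 1) * (1 + w x) + (q + 1)) / (v * w x) := by
    gcongr
    linarith
  refine le_trans (le_of_eq ?_) (mul_le_mul hR hS1 (by positivity) (by positivity))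
  field_simp

/-- The differential inequality at the origin, where the profile has a strict maximum. -/
lemma profile_supersolution_at_origin {n : ℕ} {lam Lam : ℝ} (hlam : 0 < lam)
    {F : Matrix (Fin n) (Fin n) ℝ → ℝ} (hF1 : SatisfiesH1 lam Lam F) (hF2 : SatisfiesH2 F)
    {w φ : EuclideanSpace ℝ (Fin n) → ℝ} {q c : ℝ} (hq : 0 < q) (hw0 : w 0 = 0) (hc : 0 < c)
    (hwc : ∀ x, c * ‖x‖ ^ 2 ≤ w x) (hφ : ContDiffAt ℝ 2 φ 0)
    (hmin : IsLocalMin (fun y => (1 + w y) ^ (-q⁻¹) - φ y) 0) :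
    lam * (n * (2 * (q⁻¹ / (2 + q⁻¹) * c))) ≤ F (hessianMatrix φ 0) := by
  have hk : 0 < q⁻¹ := inv_pos.2 hq
  refine le_F_hessianMatrix_of_paraboloid hlam hF1 hF2 (by positivity) hφ ?_
  have hcont : ContinuousAt (fun x : EuclideanSpace ℝ (Fin n) => c * ‖x‖ ^ 2) 0 := by fun_prop
  have hsmall : ∀ᶠ x : EuclideanSpace ℝ (Fin n) in nhds 0, c * ‖x‖ ^ 2 < 1 :=
    hcont.eventually (gt_mem_nhds (by simp))
  filter_upwards [hmin, hsmall] with x h1 h2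
  simp only [hw0, add_zero, Real.one_rpow] at h1
  have h0 : 0 ≤ c * ‖x‖ ^ 2 := by positivity
  have h3 := profile_le hk h0 h2.le
  have h4 : (1 + w x) ^ (-q⁻¹) ≤ (1 + c * ‖x‖ ^ 2) ^ (-q⁻¹) :=
    Real.rpow_le_rpow_of_nonpos (by linarith) (by linarith [hwc x]) (by linarith)
  rw [mul_assoc]
  linarith

/-! ### The homogeneous weight `w = Φ^{-2/a}` -/

/-- The function `w = Φ^{-2/a}`, extended by `0` at the origin: a positive function homogeneous
of degree two, comparable to `‖x‖²`. -/
noncomputable def weight {n : ℕ} (Φ : EuclideanSpace ℝ (Fin n) → ℝ) (a : ℝ)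
    (x : EuclideanSpace ℝ (Fin n)) : ℝ :=
  open Classical in if x = 0 then 0 else Φ x ^ (-(2 / a))

lemma weight_zero {n : ℕ} (Φ : EuclideanSpace ℝ (Fin n) → ℝ) (a : ℝ) : weight Φ a 0 = 0 := by
  simp [weight]

lemma weight_of_ne {n : ℕ} (Φ : EuclideanSpace ℝ (Fin n) → ℝ) (a : ℝ)
    {x : EuclideanSpace ℝ (Fin n)} (hx : x ≠ 0) : weight Φ a x = Φ x ^ (-(2 / a)) := by
  simp [weight, hx]

section
variable {n : ℕ} {F : Matrix (Fin n) (Fin n) ℝ → ℝ} {Φ : EuclideanSpace ℝ (Fin n) → ℝ} {a : ℝ}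

lemma fundamental_pos (hΦ : IsFundamentalSolution F Φ a) (ha : 0 < a)
    {x : EuclideanSpace ℝ (Fin n)} (hx : x ≠ 0) : 0 < Φ x :=
  pos_of_mul_pos_right (hΦ.2.2.2.2 ha.ne' 1 one_pos x hx).2 ha.le

lemma weight_pos (hΦ : IsFundamentalSolution F Φ a) (ha : 0 < a)
    {x : EuclideanSpace ℝ (Fin n)} (hx : x ≠ 0) : 0 < weight Φ a x := by
  rw [weight_of_ne Φ a hx]
  exact Real.rpow_pos_of_pos (fundamental_pos hΦ ha hx) _

lemma fundamental_eq_weight (hΦ : IsFundamentalSolution F Φ a) (ha : 0 < a)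
    {x : EuclideanSpace ℝ (Fin n)} (hx : x ≠ 0) : Φ x = weight Φ a x ^ (-(a / 2)) := by
  rw [weight_of_ne Φ a hx, ← Real.rpow_mul (fundamental_pos hΦ ha hx).le]
  have : -(2 / a) * -(a / 2) = 1 := by field_simp
  rw [this, Real.rpow_one]

lemma weight_smul (hΦ : IsFundamentalSolution F Φ a) (ha : 0 < a)
    {x : EuclideanSpace ℝ (Fin n)} (hx : x ≠ 0) {t : ℝ} (ht : 0 < t) :
    weight Φ a (t • x) = t ^ 2 * weight Φ a x := by
  have htx : t • x ≠ 0 := smul_ne_zero ht.ne' hx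
  rw [weight_of_ne Φ a hx, weight_of_ne Φ a htx, (hΦ.2.2.2.2 ha.ne' t ht x hx).1,
    Real.mul_rpow (by positivity) (fundamental_pos hΦ ha htx).le, ← Real.rpow_mul ht.le]
  have : a * -(2 / a) = -2 := by field_simp
  rw [this, ← mul_assoc, Real.rpow_neg ht.le, Real.rpow_two, mul_inv_cancel₀ (by positivity),
    one_mul]

lemma continuousOn_weight (hΦ : IsFundamentalSolution F Φ a) (ha : 0 < a) :
    ContinuousOn (weight Φ a) {x | x ≠ 0} :=
  (hΦ.1.rpow_const fun _ hx => Or.inl (fundamental_pos hΦ ha hx).ne').congr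
    fun _ hx => weight_of_ne Φ a hx

/-- Two-sided quadratic bounds, by compactness of the unit sphere and homogeneity. -/
lemma exists_weight_bounds (hn : 2 ≤ n) (hΦ : IsFundamentalSolution F Φ a) (ha : 0 < a) :
    ∃ c C : ℝ, 0 < c ∧ ∀ x, c * ‖x‖ ^ 2 ≤ weight Φ a x ∧ weight Φ a x ≤ C * ‖x‖ ^ 2 := by
  have hsub : Metric.sphere (0 : EuclideanSpace ℝ (Fin n)) 1 ⊆ {x | x ≠ 0} := by
    rintro x hx rfl
    simp at hx
  have hne : (Metric.sphere (0 : EuclideanSpace ℝ (Fin n)) 1).Nonempty :=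
    ⟨EuclideanSpace.single ⟨0, by omega⟩ 1, by simp⟩
  have hcont := (continuousOn_weight hΦ ha).mono hsub
  obtain ⟨y, hy, hymin⟩ := (isCompact_sphere _ _).exists_isMinOn hne hcont
  obtain ⟨z, _, hzmax⟩ := (isCompact_sphere _ _).exists_isMaxOn hne hcont
  refine ⟨weight Φ a y, weight Φ a z, weight_pos hΦ ha (hsub hy), fun x => ?_⟩
  by_cases hx : x = 0
  · simp [hx, weight_zero]
  have hnx : 0 < ‖x‖ := norm_pos_iff.2 hx
  have hmem : ‖x‖⁻¹ • x ∈ Metric.sphere (0 : EuclideanSpace ℝ (Fin n)) 1 := by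
    simp [norm_smul, hnx.ne']
  have h1 : weight Φ a x = ‖x‖ ^ 2 * weight Φ a (‖x‖⁻¹ • x) := by
    rw [← weight_smul hΦ ha (hsub hmem) hnx, smul_smul, mul_inv_cancel₀ hnx.ne', one_smul]
  rw [h1, mul_comm (‖x‖ ^ 2)]
  exact ⟨mul_le_mul_of_nonneg_right (hymin hmem) (by positivity),
    mul_le_mul_of_nonneg_right (hzmax hmem) (by positivity)⟩

lemma continuous_weight (hn : 2 ≤ n) (hΦ : IsFundamentalSolution F Φ a) (ha : 0 < a) :
    Continuous (weight Φ a) := by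
  rw [continuous_iff_continuousAt]
  intro x
  by_cases hx : x = 0
  · subst hx
    obtain ⟨c, C, _, hb⟩ := exists_weight_bounds hn hΦ ha
    rw [ContinuousAt, weight_zero]
    have hlo : Continuous fun x : EuclideanSpace ℝ (Fin n) => c * ‖x‖ ^ 2 := by fun_prop
    have hup : Continuous fun x : EuclideanSpace ℝ (Fin n) => C * ‖x‖ ^ 2 := by fun_prop
    exact tendsto_of_tendsto_of_tendsto_of_le_of_le (by simpa using hlo.tendsto 0)
      (by simpa using hup.tendsto 0) (fun x => (hb x).1) (fun x => (hb x).2)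
  · exact (continuousOn_weight hΦ ha).continuousAt (isOpen_ne.mem_nhds hx)

end

theorem existence_global_supersolution
    (n : ℕ) (hn : 2 ≤ n) (lam Lam : ℝ) (hlam : 0 < lam) (hLam : lam ≤ Lam)
    (F : Matrix (Fin n) (Fin n) ℝ → ℝ)
    (hF1 : SatisfiesH1 lam Lam F) (hF2 : SatisfiesH2 F)
    (p : ℝ) (hp : 1 < p)
    (Φ : EuclideanSpace ℝ (Fin n) → ℝ) (a : ℝ) (ha : -1 < a)
    (hΦ : IsFundamentalSolution F Φ a) (hcrit : 2 / (p - 1) < a) :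
    ∃ u : EuclideanSpace ℝ (Fin n) → ℝ, Continuous u ∧ (∀ x, 0 < u x) ∧
      ViscositySupersolution F Set.univ (fun x => u x ^ p) u := by
  have hq : 0 < p - 1 := by linarith
  set q := p - 1 with hqdef
  have ha0 : 0 < a := lt_trans (by positivity) hcrit
  have hbq : 1 < a / 2 * q := by
    rw [div_lt_iff₀ hq] at hcrit
    linarith
  obtain ⟨c, C, hc, hbd⟩ := exists_weight_bounds hn hΦ ha0
  set w := weight Φ a with hw
  have hw0 : ∀ x, 0 ≤ w x := fun x => le_trans (by positivity) (hbd x).1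
  have hqinv : 0 < q⁻¹ := inv_pos.2 hq
  have hn0 : (0 : ℝ) < n := by exact_mod_cast (by omega : 0 < n)
  set K₁ := lam * ((a / 2 * q - 1) * (4 * q⁻¹ ^ 2) * c) with hK₁
  set K₂ := lam * (n * (2 * (q⁻¹ / (2 + q⁻¹) * c))) with hK₂
  have hK₁pos : 0 < K₁ := by
    have : 0 < a / 2 * q - 1 := by linarith
    positivity
  have hK₂pos : 0 < K₂ := by positivity
  set K := min K₁ K₂ with hK
  have hKpos : 0 < K := lt_min hK₁pos hK₂pos
  -- The factor `ε` is chosen so that `ε ^ p = ε * K`.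
  set ε := K ^ q⁻¹ with hε
  have hεpos : 0 < ε := Real.rpow_pos_of_pos hKpos _
  have hεp : ε ^ p = ε * K := by
    have h1 : ε ^ q = K := by
      rw [hε, ← Real.rpow_mul hKpos.le, inv_mul_cancel₀ hq.ne', Real.rpow_one]
    have h2 : p = q + 1 := by rw [hqdef]; ring
    rw [h2, Real.rpow_add_one hεpos.ne', h1, mul_comm]
  have hpos : ∀ x, 0 < (1 + w x) ^ (-q⁻¹) := fun x => profile_pos (hw0 x)
  refine ⟨fun x => ε * (1 + w x) ^ (-q⁻¹), ?_, fun x => mul_pos hεpos (hpos x), ?_⟩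
  · have hcw : Continuous w := continuous_weight hn hΦ ha0
    exact continuous_const.mul ((continuous_const.add hcw).rpow_const fun x =>
      Or.inl (by have := hw0 x; exact (by linarith : 0 < 1 + w x).ne'))
  intro x _ φ hφ hmin
  rw [isLocalMinOn_univ_iff] at hmin
  -- The test function, rescaled and shifted to touch the unscaled profile at `x`.
  set ψ : EuclideanSpace ℝ (Fin n) → ℝ :=
    fun y => ε⁻¹ * φ y + ((1 + w x) ^ (-q⁻¹) - ε⁻¹ * φ x) with hψ
  have hψC : ContDiffAt ℝ 2 ψ x := (contDiffAt_const.mul hφ).add contDiffAt_const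
  have hψx : ψ x = (1 + w x) ^ (-q⁻¹) := by simp [hψ]
  have hψmin : IsLocalMin (fun y => (1 + w y) ^ (-q⁻¹) - ψ y) x := by
    filter_upwards [hmin] with y hy
    have h1 := mul_le_mul_of_nonneg_left hy (inv_pos.2 hεpos).le
    rw [mul_sub, mul_sub, inv_mul_cancel_left₀ hεpos.ne', inv_mul_cancel_left₀ hεpos.ne'] at h1
    simp only [hψ]
    linarith
  have hkey : K * (1 + w x) ^ (-q⁻¹ * p) ≤ F (hessianMatrix ψ x) := by
    by_cases hx : x = 0
    · subst hx
      have h1 := profile_supersolution_at_origin hlam hF1 hF2 hq (weight_zero Φ a) hc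
        (fun y => (hbd y).1) hψC hψmin
      have h2 : w 0 = 0 := weight_zero Φ a
      rw [h2, add_zero, Real.one_rpow, mul_one]
      exact (min_le_right _ _).trans h1
    · have h1 := profile_supersolution_off_origin hlam hF1 hF2 (half_pos ha0) hq hbq
        hΦ.2.2.1.2 (fun y => weight_pos hΦ ha0) (fun y => fundamental_eq_weight hΦ ha0)
        (fun y hy t => weight_smul hΦ ha0 hy) hc.le (fun y => (hbd y).1) hx hψC hψx hψmin
      have h2 : q + 1 = p := by rw [hqdef]; ring
      rw [h2, hψx, ← Real.rpow_mul (by linarith [hw0 x])] at h1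
      refine le_trans (mul_le_mul_of_nonneg_right (min_le_left _ _) ?_) h1
      exact Real.rpow_nonneg (by linarith [hw0 x]) _
  rw [hψ, hessianMatrix_affine hφ, hF2 _ (inv_pos.2 hεpos).le _ (hessianMatrix_isSymm hφ),
    le_inv_mul_iff₀ hεpos] at hkey
  simp only
  rw [Real.mul_rpow hεpos.le (hpos x).le, hεp, ← Real.rpow_mul (by linarith [hw0 x]), mul_assoc]
  exact hkey
end
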